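/- Let γ_1, …, γ_k and γ̂_1, …, γ̂_k be unit vectors in ℝ^p with coordinates γ_h = (γ_{1h}, …, γ_{ph}) and γ̂_h = (γ̂_{1h}, …, γ̂_{ph}), and let λ_1, …, λ_k ≥ 0 and λ̂_1, …, λ̂_k ≥ 0. Then Σ_{i=1}^p | Σ_{h=1}^k λ̂_h γ̂_{ih}² − Σ_{h=1}^k λ_h γ_{ih}² | ≤ Σ_{h=1}^k |λ̂_h − λ_h| + 2 Σ_{h=1}^k λ_h ‖γ̂_h − γ_h‖₂. (This bounds Σ_i |‖b̂_i‖² − ‖b_i‖²|, where b_iᵀ and b̂_iᵀ are the i-th rows of B = (√λ_1 γ_1, …, √λ_k γ_k) and B̂ = (√λ̂_1 γ̂_1, …, √λ̂_k γ̂_k).) -/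

import Mathlib

/-!
Each coordinate difference splits as
`lamhat * a ^ 2 - lam * b ^ 2 = (lamhat - lam) * a ^ 2 + lam * (a ^ 2 - b ^ 2)`.
Summed over the coordinates, the first part contributes `|lamhat - lam|` because `a` is a unit
vector. For the second, `|a ^ 2 - b ^ 2| = |a - b| * |a + b|`, and Cauchy–Schwarz together with
`‖a + b‖ ≤ 2` gives `2 * ‖a - b‖` (`sum_abs_sq_sub_sq_le`). The triangle inequality over `h` and an
exchange of the two sums finish the proof.
-/

lemma sum_abs_sq_sub_sq_le {ι : Type*} [Fintype ι] (a b : ι → ℝ)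
    (ha : ∑ i, a i ^ 2 = 1) (hb : ∑ i, b i ^ 2 = 1) :
    ∑ i, |a i ^ 2 - b i ^ 2| ≤ 2 * Real.sqrt (∑ i, (a i - b i) ^ 2) := by
  have hcs := Real.sum_mul_le_sqrt_mul_sqrt Finset.univ
    (fun i => |a i + b i|) (fun i => |a i - b i|)
  simp only [sq_abs] at hcs
  have hsum : ∑ i, (a i + b i) ^ 2 ≤ 2 ^ 2 := by
    calc ∑ i, (a i + b i) ^ 2 ≤ ∑ i, (2 * a i ^ 2 + 2 * b i ^ 2) :=
          Finset.sum_le_sum fun i _ => by nlinarith [sq_nonneg (a i - b i)]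
      _ = 2 ^ 2 := by
          rw [Finset.sum_add_distrib, ← Finset.mul_sum, ← Finset.mul_sum, ha, hb]
          norm_num
  calc ∑ i, |a i ^ 2 - b i ^ 2| = ∑ i, |a i + b i| * |a i - b i| :=
        Finset.sum_congr rfl fun i _ => by rw [sq_sub_sq, abs_mul]
    _ ≤ _ := hcs
    _ ≤ _ := mul_le_mul_of_nonneg_right
        (Real.sqrt_le_iff.mpr ⟨by norm_num, hsum⟩) (Real.sqrt_nonneg _)

/-- Bound on `∑ i |‖b̂ i‖² - ‖b i‖²|` where `b iᵀ` and `b̂ iᵀ` are the `i`-th rows of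
`B = (√λ 1 γ 1, …, √λ k γ k)` and `B̂ = (√λ̂ 1 γ̂ 1, …, √λ̂ k γ̂ k)`: for unit vectors
`γ h, γ̂ h ∈ ℝ^p` and nonnegative `λ h, λ̂ h`,
`∑ i |∑ h λ̂ h γ̂ h i ^ 2 - ∑ h λ h γ h i ^ 2| ≤ ∑ h |λ̂ h - λ h| + 2 ∑ h λ h ‖γ̂ h - γ h‖₂`. -/
theorem sum_abs_row_norm_sq_diff_bound (p k : ℕ)
    (γ γhat : Fin k → Fin p → ℝ)
    (hγ : ∀ h, Real.sqrt (∑ i, γ h i ^ 2) = 1)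
    (hγhat : ∀ h, Real.sqrt (∑ i, γhat h i ^ 2) = 1)
    (lam lamhat : Fin k → ℝ) (hlam : ∀ h, 0 ≤ lam h) (hlamhat : ∀ h, 0 ≤ lamhat h) :
    ∑ i, |∑ h, lamhat h * γhat h i ^ 2 - ∑ h, lam h * γ h i ^ 2| ≤
      ∑ h, |lamhat h - lam h| +
        2 * ∑ h, lam h * Real.sqrt (∑ i, (γhat h i - γ h i) ^ 2) := by
  have ha : ∀ h, ∑ i, γhat h i ^ 2 = 1 := fun h => Real.sqrt_eq_one.mp (hγhat h)
  have hb : ∀ h, ∑ i, γ h i ^ 2 = 1 := fun h => Real.sqrt_eq_one.mp (hγ h)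
  calc ∑ i, |∑ h, lamhat h * γhat h i ^ 2 - ∑ h, lam h * γ h i ^ 2|
      ≤ ∑ i, ∑ h, (|lamhat h - lam h| * γhat h i ^ 2
          + lam h * |γhat h i ^ 2 - γ h i ^ 2|) := by
        refine Finset.sum_le_sum fun i _ => ?_
        rw [← Finset.sum_sub_distrib]
        refine (Finset.abs_sum_le_sum_abs _ _).trans (Finset.sum_le_sum fun h _ => ?_)
        calc |lamhat h * γhat h i ^ 2 - lam h * γ h i ^ 2|
            = |(lamhat h - lam h) * γhat h i ^ 2
                + lam h * (γhat h i ^ 2 - γ h i ^ 2)| := by congr 1; ring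
          _ ≤ _ := abs_add_le _ _
          _ = _ := by
            rw [abs_mul, abs_mul, abs_of_nonneg (hlam h), abs_of_nonneg (sq_nonneg (γhat h i))]
    _ = ∑ h, (|lamhat h - lam h| + lam h * ∑ i, |γhat h i ^ 2 - γ h i ^ 2|) := by
        rw [Finset.sum_comm]
        refine Finset.sum_congr rfl fun h _ => ?_
        rw [Finset.sum_add_distrib, ← Finset.mul_sum, ← Finset.mul_sum, ha h, mul_one]
    _ ≤ ∑ h, (|lamhat h - lam h|
          + lam h * (2 * Real.sqrt (∑ i, (γhat h i - γ h i) ^ 2))) := by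
        refine Finset.sum_le_sum fun h _ => ?_
        have := mul_le_mul_of_nonneg_left
          (sum_abs_sq_sub_sq_le (γhat h) (γ h) (ha h) (hb h)) (hlam h)
        linarith
    _ = _ := by
        rw [Finset.sum_add_distrib, Finset.mul_sum]
        congr 1
        exact Finset.sum_congr rfl fun h _ => by ring
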